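/- Let n ≥ 2, let H = u⊥ + t₀u (u a unit vector, t₀ ∈ ℝ) be a hyperplane in ℝⁿ, and let ∂_k ∈ 𝒥_H(𝒦ⁿₙ) for k = 0, 1, 2, …, with associated contractions φ_{∂_k} : ℝ → ℝ satisfying ∂_k B(x + tu, r) = B(x + φ_{∂_k}(t)u, r) essentially for x ∈ u⊥, t ∈ ℝ, r > 0. (i) If ∂_k → ∂_0 (i.e., ‖1_{∂_k K} − 1_{∂_0 K}‖_{L¹} → 0 for every K ∈ 𝒦ⁿₙ), then φ_{∂_k} → φ_{∂_0} pointwise. (ii) If φ_{∂_k} → φ pointwise as k → ∞ (k ≥ 1), then there is an essentially unique map ∂ ∈ 𝒥_H(𝒦ⁿₙ) whose associated contraction is φ and such that ∂_k → ∂. -/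

import Mathlib

open MeasureTheory Metric Filter Topology
open scoped RealInnerProductSpace

noncomputable section

abbrev Euc (n : ℕ) : Type := EuclideanSpace ℝ (Fin n)

/-- `A` is essentially contained in `B` (up to a set of measure zero). -/
def essSub {n : ℕ} (A B : Set (Euc n)) : Prop := volume (A \ B) = 0

/-- `A` is essentially equal to `B` (up to a set of measure zero). -/
def essEq {n : ℕ} (A B : Set (Euc n)) : Prop := volume ((A \ B) ∪ (B \ A)) = 0

/-- The symmetric difference of two sets. -/
def sd {n : ℕ} (A B : Set (Euc n)) : Set (Euc n) := (A \ B) ∪ (B \ A)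

/-- A convex body: a compact convex set with nonempty interior. -/
def isConvexBody {n : ℕ} (A : Set (Euc n)) : Prop :=
  IsCompact A ∧ Convex ℝ A ∧ (interior A).Nonempty

/-- The infinite spherical cylinder of radius `ρ` whose axis passes through `c`
in direction `u`. -/
def cyl {n : ℕ} (u c : Euc n) (ρ : ℝ) : Set (Euc n) :=
  {y | ‖(y - c) - ⟪y - c, u⟫ • u‖ ≤ ρ}

/-- Membership in `𝒥_H(𝒦ⁿₙ)`: a map on convex bodies, with values in `𝓛ⁿ`, that is
monotonic, measure preserving, maps balls to balls, and respects `H`-cylinders,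
where `H` is a hyperplane with unit normal `u`. -/
def inJH {n : ℕ} (u : Euc n) (D : Set (Euc n) → Set (Euc n)) : Prop :=
  (∀ A : Set (Euc n), isConvexBody A → MeasurableSet (D A) ∧ volume (D A) ≠ ⊤) ∧
  (∀ A B : Set (Euc n), isConvexBody A → isConvexBody B →
      essSub A B → essSub (D A) (D B)) ∧
  (∀ A : Set (Euc n), isConvexBody A → volume (D A) = volume A) ∧
  (∀ A : Set (Euc n), isConvexBody A →
      (∃ (x : Euc n) (r : ℝ), 0 < r ∧ essEq A (closedBall x r)) →
      ∃ (x' : Euc n) (r' : ℝ), 0 < r' ∧ essEq (D A) (closedBall x' r')) ∧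
  (∀ A : Set (Euc n), isConvexBody A → ∀ (c : Euc n) (ρ : ℝ), 0 < ρ →
      essSub A (cyl u c ρ) → essSub (D A) (cyl u c ρ))

/-- `φ` is the contraction associated with `D` (with respect to the direction `u`):
`∂B(x + tu, r) = B(x + φ(t)u, r)`, essentially. -/
def assocContr {n : ℕ} (u : Euc n) (D : Set (Euc n) → Set (Euc n)) (φ : ℝ → ℝ) : Prop :=
  LipschitzWith 1 φ ∧ ∀ x : Euc n, ⟪x, u⟫ = 0 → ∀ t r : ℝ, 0 < r →
    essEq (D (closedBall (x + t • u) r)) (closedBall (x + φ t • u) r)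

/-- Convergence `∂_k → ∂` on the convex bodies, in the `L¹` sense of indicator functions. -/
def convOnK {n : ℕ} (Dk : ℕ → Set (Euc n) → Set (Euc n))
    (D : Set (Euc n) → Set (Euc n)) : Prop :=
  ∀ K : Set (Euc n), isConvexBody K →
    Tendsto (fun k => volume (sd (Dk k K) (D K))) atTop (𝓝 0)

lemma shear_vol {n : ℕ} (u : Euc n) (hu : ‖u‖ = 1) (g : Euc n → ℝ) (hg : Measurable g)
    (hinv : ∀ y (s : ℝ), g (y + s • u) = g y) (V : Set (Euc n)) (hV : MeasurableSet V) :
    volume {y | y - g y • u ∈ V} = volume V := by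
  classical
  have huu : ⟪u, u⟫ = 1 := by rw [real_inner_self_eq_norm_sq, hu]; norm_num
  set W : Set (Euc n) := {y | ⟪y, u⟫ ∈ Set.Ico (0:ℝ) 1} with hWd
  have hW : MeasurableSet W := by
    have : Measurable (fun y : Euc n => ⟪y, u⟫) := by fun_prop
    exact this measurableSet_Ico
  set w : Euc n → ENNReal := W.indicator 1 with hw
  have hwm : Measurable w := measurable_one.indicator hW
  have hw1 : ∀ y : Euc n, ∫⁻ s : ℝ, w (y + s • u) = 1 := by
    intro y
    have : (fun s : ℝ => w (y + s • u)) = (Set.Ico (-⟪y, u⟫) (1 - ⟪y,u⟫)).indicator 1 := by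
      ext s
      simp only [hw, Set.indicator, hWd, Set.mem_ofPred_eq, inner_add_left, inner_smul_left, huu, Set.mem_Ico]
      congr 1
      simp only [conj_trivial, mul_one, eq_iff_iff]
      constructor <;> rintro ⟨h1, h2⟩ <;> constructor <;> linarith
    rw [this, lintegral_indicator_one measurableSet_Ico, Real.volume_Ico]
    simp
  have key : ∀ g : Euc n → ℝ, Measurable g → (∀ y (s : ℝ), g (y + s • u) = g y) →
      volume {y | y - g y • u ∈ V} = ∫⁻ y, w y * ∫⁻ s : ℝ, V.indicator 1 (y + s • u) := by
    intro g hg hinv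
    have hT : Measurable (fun y : Euc n => y - g y • u) := by fun_prop
    set F : Euc n → ENNReal := fun y => V.indicator 1 (y - g y • u) with hF
    have hi1 : Measurable (V.indicator (1 : Euc n → ENNReal)) := measurable_one.indicator hV
    have hFm : Measurable F := hi1.comp hT
    calc volume {y | y - g y • u ∈ V} = ∫⁻ y, F y := by
          exact (lintegral_indicator_one (hT hV)).symm
      _ = ∫⁻ y, ∫⁻ s : ℝ, F y * w (y + s • u) := by
          refine lintegral_congr fun y => ?_
          rw [lintegral_const_mul, hw1, mul_one]
          fun_prop
      _ = ∫⁻ s : ℝ, ∫⁻ y, F y * w (y + s • u) := by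
          apply lintegral_lintegral_swap
          apply Measurable.aemeasurable
          fun_prop
      _ = ∫⁻ s : ℝ, ∫⁻ y, F (y + (-s) • u) * w y := by
          refine lintegral_congr fun s => ?_
          rw [← lintegral_add_right_eq_self (fun y => F (y + (-s) • u) * w y) (s • u)]
          simp
      _ = ∫⁻ y, ∫⁻ s : ℝ, F (y + (-s) • u) * w y := by
          symm
          apply lintegral_lintegral_swap
          apply Measurable.aemeasurable
          fun_prop
      _ = _ := by
          refine lintegral_congr fun y => ?_
          rw [lintegral_mul_const, mul_comm]
          · congr 1
            rw [← lintegral_sub_left_eq_self (fun s : ℝ => V.indicator 1 (y + s • u)) (- g y)]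
            refine lintegral_congr fun s => ?_
            simp only [hF, hinv]
            congr 1
            module
          · fun_prop
  rw [key g hg hinv]
  have := key (fun _ => 0) measurable_const (by simp)
  rw [← this]; simp

lemma shear_conv {n : ℕ} (u : Euc n) (hu : ‖u‖ = 1) (g : Euc n → ℝ) (gk : ℕ → Euc n → ℝ)
    (hg : Measurable g) (hgk : ∀ k, Measurable (gk k))
    (hinv : ∀ y (s : ℝ), g (y + s • u) = g y)
    (hlim : ∀ y, Tendsto (fun k => gk k y) atTop (𝓝 (g y)))
    (M : ℝ) (hM : ∀ k y, |gk k y| ≤ M)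
    (V : Set (Euc n)) (hV : MeasurableSet V) (hc : Convex ℝ V) (hb : Bornology.IsBounded V) :
    Tendsto (fun k => volume (sd {y | y - gk k y • u ∈ V} {y | y - g y • u ∈ V})) atTop (𝓝 0) := by
  obtain ⟨R, hR⟩ := hb.subset_closedBall 0
  have hMg : ∀ y, |g y| ≤ M := fun y => le_of_tendsto (hlim y).abs (Eventually.of_forall fun k => hM k y)
  have hT : Measurable (fun y : Euc n => y - g y • u) := by fun_prop
  have hTk : ∀ k, Measurable (fun y : Euc n => y - gk k y • u) := fun k => by
    have := hgk k
    fun_prop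
  have hfr : volume {y | y - g y • u ∈ frontier V} = 0 := by
    rw [shear_vol u hu g hg hinv _ isClosed_frontier.measurableSet]
    exact hc.addHaar_frontier volume
  have hms : ∀ k, MeasurableSet (sd {y | y - gk k y • u ∈ V} {y | y - g y • u ∈ V}) := fun k =>
    (((hTk k) hV).diff (hT hV)).union ((hT hV).diff ((hTk k) hV))
  have hsub : ∀ (a : ℝ) (y : Euc n), |a| ≤ M → y - a • u ∈ V → y ∈ closedBall (0 : Euc n) (R + M) := by
    intro a y ha hy
    have h1 := hR hy
    rw [mem_closedBall_zero_iff] at h1 ⊢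
    calc ‖y‖ = ‖(y - a • u) + a • u‖ := by simp
      _ ≤ ‖y - a • u‖ + ‖a • u‖ := norm_add_le _ _
      _ ≤ R + M := by rw [norm_smul, hu, mul_one, Real.norm_eq_abs]; linarith
  have := tendsto_measure_of_ae_tendsto_indicator (μ := volume) (L := atTop) (A := (∅ : Set (Euc n)))
    (As := fun k => sd {y | y - gk k y • u ∈ V} {y | y - g y • u ∈ V})
    MeasurableSet.empty hms
    (B := closedBall (0 : Euc n) (R + M)) isClosed_closedBall.measurableSet
    (measure_closedBall_lt_top.ne) (Eventually.of_forall fun k y hy => by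
      rcases hy with ⟨hy, _⟩ | ⟨hy, _⟩
      · exact hsub _ y (hM k y) hy
      · exact hsub _ y (hMg y) hy)
    (by
      rw [ae_iff]
      refine measure_mono_null ?_ hfr
      intro y hy
      by_contra hyf
      apply hy
      have hyl : Tendsto (fun k => y - gk k y • u) atTop (𝓝 (y - g y • u)) :=
        tendsto_const_nhds.sub ((hlim y).smul_const u)
      simp only [Set.mem_empty_iff_false, iff_false]
      by_cases hin : y - g y • u ∈ V
      · have : y - g y • u ∈ interior V := by
          by_contra h
          exact hyf ⟨subset_closure hin, h⟩
        filter_upwards [hyl.eventually (isOpen_interior.mem_nhds this)] with k hk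
        rintro (⟨_, h⟩ | ⟨_, h⟩)
        · exact h hin
        · exact h (interior_subset (s := V) hk)
      · have : y - g y • u ∈ (closure V)ᶜ := by
          intro h
          exact hyf ⟨h, fun h' => hin (interior_subset h')⟩
        filter_upwards [hyl.eventually (isClosed_closure.isOpen_compl.mem_nhds this)] with k hk
        rintro (⟨h, _⟩ | ⟨h, _⟩)
        · exact hk (subset_closure h)
        · exact hin h)
  simpa using this

/-- orthogonal projection to the complement of `u` -/
def prj {n : ℕ} (u y : Euc n) : Euc n := y - ⟪y, u⟫ • u

/-- heights of the points of `V` above the line through `y` -/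
def fib {n : ℕ} (u : Euc n) (V : Set (Euc n)) (y : Euc n) : Set ℝ := {t | prj u y + t • u ∈ V}

/-- midpoint of the chord -/
def mid {n : ℕ} (u : Euc n) (V : Set (Euc n)) (y : Euc n) : ℝ :=
  (sInf (fib u V y) + sSup (fib u V y)) / 2

lemma inner_self_one {n : ℕ} {u : Euc n} (hu : ‖u‖ = 1) : ⟪u, u⟫ = 1 := by
  rw [real_inner_self_eq_norm_sq, hu]; norm_num

lemma prj_add {n : ℕ} {u : Euc n} (hu : ‖u‖ = 1) (y : Euc n) (s : ℝ) :
    prj u (y + s • u) = prj u y := by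
  simp only [prj, inner_add_left, inner_smul_left, inner_self_one hu, conj_trivial, mul_one]
  module

lemma prj_inner {n : ℕ} {u : Euc n} (hu : ‖u‖ = 1) (y : Euc n) : ⟪prj u y, u⟫ = 0 := by
  rw [prj, inner_sub_left, inner_smul_left, inner_self_one hu]; simp

lemma prj_cont {n : ℕ} (u : Euc n) : Continuous (prj u) := by
  unfold prj; fun_prop

lemma mid_add {n : ℕ} {u : Euc n} (hu : ‖u‖ = 1) (V : Set (Euc n)) (y : Euc n) (s : ℝ) :
    mid u V (y + s • u) = mid u V y := by
  simp only [mid, fib, prj_add hu]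

lemma fib_bd {n : ℕ} {u : Euc n} (hu : ‖u‖ = 1) {V : Set (Euc n)} {R : ℝ}
    (hR : V ⊆ closedBall 0 R) (y : Euc n) {t : ℝ} (ht : t ∈ fib u V y) : |t| ≤ R := by
  have h1 : prj u y + t • u ∈ V := ht
  have h2 := hR h1
  rw [mem_closedBall_zero_iff] at h2
  have h3 : ⟪prj u y + t • u, u⟫ = t := by
    rw [inner_add_left, prj_inner hu, inner_smul_left, inner_self_one hu]; simp
  have h4 := abs_real_inner_le_norm (prj u y + t • u) u
  rw [h3, hu, mul_one] at h4
  linarith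

lemma sup_meas {n : ℕ} {u : Euc n} (hu : ‖u‖ = 1) {V : Set (Euc n)} (hV : IsOpen V) {R : ℝ}
    (hR : V ⊆ closedBall 0 R) : Measurable (fun y => sSup (fib u V y)) := by
  apply measurable_of_Ioi
  intro c
  have hop : ∀ c : ℝ, IsOpen {y | ∃ t ∈ fib u V y, c < t} := by
    intro c
    have : {y | ∃ t ∈ fib u V y, c < t} = ⋃ t : ℝ, ⋃ _ : c < t, (fun y => prj u y + t • u) ⁻¹' V := by
      ext y
      simp only [fib, Set.mem_ofPred_eq, Set.mem_iUnion, Set.mem_preimage]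
      constructor
      · rintro ⟨t, h1, h2⟩; exact ⟨t, h2, h1⟩
      · rintro ⟨t, h1, h2⟩; exact ⟨t, h2, h1⟩
    rw [this]
    refine isOpen_iUnion fun t => isOpen_iUnion fun _ => hV.preimage ?_
    exact (prj_cont u).add continuous_const
  have hW : MeasurableSet {y | ¬ (fib u V y).Nonempty} := by
    have : {y | (fib u V y).Nonempty} = ⋃ k : ℕ, {y | ∃ t ∈ fib u V y, -(k:ℝ) < t} := by
      ext y
      simp only [Set.mem_ofPred_eq, Set.mem_iUnion]
      constructor
      · rintro ⟨t, h1⟩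
        obtain ⟨k, hk⟩ := exists_nat_gt (-t)
        exact ⟨k, t, h1, by linarith⟩
      · rintro ⟨k, t, h1, h2⟩; exact ⟨t, h1⟩
    have h2 : MeasurableSet {y | (fib u V y).Nonempty} := by
      rw [this]; exact (isOpen_iUnion fun k => hop _).measurableSet
    exact h2.compl
  have : (fun y => sSup (fib u V y)) ⁻¹' Set.Ioi c = {y | ∃ t ∈ fib u V y, c < t} ∪
      ({y | ¬ (fib u V y).Nonempty} ∩ {_y | c < 0}) := by
    ext y
    simp only [Set.mem_preimage, Set.mem_Ioi, Set.mem_union, Set.mem_inter_iff, Set.mem_ofPred_eq]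
    by_cases hne : (fib u V y).Nonempty
    · have hbd : BddAbove (fib u V y) := ⟨R, fun t ht => (abs_le.1 (fib_bd hu hR y ht)).2⟩
      rw [lt_csSup_iff hbd hne]
      simp [hne]
    · rw [Set.not_nonempty_iff_eq_empty] at hne
      simp [hne]
  rw [this]
  exact (hop c).measurableSet.union (hW.inter (MeasurableSet.const _))

lemma fib_neg {n : ℕ} (u : Euc n) (V : Set (Euc n)) (y : Euc n) :
    fib (-u) V y = -(fib u V y) := by
  ext t
  simp [fib, prj]

lemma mid_meas {n : ℕ} {u : Euc n} (hu : ‖u‖ = 1) {V : Set (Euc n)} (hV : IsOpen V) {R : ℝ}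
    (hR : V ⊆ closedBall 0 R) : Measurable (mid u V) := by
  have h1 := sup_meas hu hV hR
  have h2 := sup_meas (u := -u) (by rwa [norm_neg]) hV hR
  have h3 : (fun y => sInf (fib u V y)) = fun y => - sSup (fib (-u) V y) := by
    ext y; rw [fib_neg, Real.sInf_def]
  have h4 : Measurable (fun y => sInf (fib u V y)) := by rw [h3]; exact h2.neg
  exact (h4.add h1).div_const 2

lemma mid_bd {n : ℕ} {u : Euc n} (hu : ‖u‖ = 1) {V : Set (Euc n)} {R : ℝ} (hR0 : 0 ≤ R)
    (hR : V ⊆ closedBall 0 R) (y : Euc n) : |mid u V y| ≤ R := by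
  by_cases hne : (fib u V y).Nonempty
  · obtain ⟨t, ht⟩ := hne
    have hbd : BddAbove (fib u V y) := ⟨R, fun t ht => (abs_le.1 (fib_bd hu hR y ht)).2⟩
    have hbd' : BddBelow (fib u V y) := ⟨-R, fun t ht => (abs_le.1 (fib_bd hu hR y ht)).1⟩
    have h1 : sSup (fib u V y) ≤ R := csSup_le ⟨t, ht⟩ fun t ht => (abs_le.1 (fib_bd hu hR y ht)).2
    have h2 : -R ≤ sInf (fib u V y) := le_csInf ⟨t, ht⟩ fun t ht => (abs_le.1 (fib_bd hu hR y ht)).1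
    have h3 := csInf_le hbd' ht
    have h4 := le_csSup hbd ht
    rw [mid, abs_le]; constructor <;> linarith
  · rw [Set.not_nonempty_iff_eq_empty] at hne
    simp [mid, hne, hR0]

/-- the shift -/
def shf {n : ℕ} (u : Euc n) (V : Set (Euc n)) (φ : ℝ → ℝ) (y : Euc n) : ℝ :=
  φ (mid u V y) - mid u V y

/-- canonical representative -/
def rep {n : ℕ} (u : Euc n) (φ : ℝ → ℝ) (K : Set (Euc n)) : Set (Euc n) :=
  {y | y - shf u (interior K) φ y • u ∈ interior K}

lemma body_bd {n : ℕ} {K : Set (Euc n)} (hK : isConvexBody K) :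
    ∃ R, 0 ≤ R ∧ interior K ⊆ closedBall 0 R := by
  obtain ⟨R, hR⟩ := hK.1.isBounded.subset_closedBall 0
  exact ⟨max R 0, le_max_right _ _, interior_subset.trans (hR.trans (closedBall_subset_closedBall (le_max_left _ _)))⟩

lemma shf_meas {n : ℕ} {u : Euc n} (hu : ‖u‖ = 1) {K : Set (Euc n)} (hK : isConvexBody K)
    {φ : ℝ → ℝ} (hφ : LipschitzWith 1 φ) : Measurable (shf u (interior K) φ) := by
  obtain ⟨R, _, hR⟩ := body_bd hK
  have := mid_meas hu isOpen_interior hR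
  exact (hφ.continuous.measurable.comp this).sub this

lemma shf_add {n : ℕ} {u : Euc n} (hu : ‖u‖ = 1) (V : Set (Euc n)) (φ : ℝ → ℝ) (y : Euc n) (s : ℝ) :
    shf u V φ (y + s • u) = shf u V φ y := by
  simp only [shf, mid_add hu]

lemma rep_meas {n : ℕ} {u : Euc n} (hu : ‖u‖ = 1) {K : Set (Euc n)} (hK : isConvexBody K)
    {φ : ℝ → ℝ} (hφ : LipschitzWith 1 φ) : MeasurableSet (rep u φ K) := by
  have := shf_meas hu hK hφ
  have hT : Measurable (fun y : Euc n => y - shf u (interior K) φ y • u) := by fun_prop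
  exact hT isOpen_interior.measurableSet

lemma rep_vol {n : ℕ} {u : Euc n} (hu : ‖u‖ = 1) {K : Set (Euc n)} (hK : isConvexBody K)
    {φ : ℝ → ℝ} (hφ : LipschitzWith 1 φ) : volume (rep u φ K) = volume K := by
  rw [rep, shear_vol u hu _ (shf_meas hu hK hφ) (shf_add hu _ φ) _ isOpen_interior.measurableSet]
  exact measure_congr (interior_ae_eq_of_null_frontier (hK.2.1.addHaar_frontier volume))

lemma rep_conv {n : ℕ} {u : Euc n} (hu : ‖u‖ = 1) {K : Set (Euc n)} (hK : isConvexBody K)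
    {φ : ℝ → ℝ} (hφ : LipschitzWith 1 φ) {φk : ℕ → ℝ → ℝ} (hφk : ∀ k, LipschitzWith 1 (φk k))
    (hlim : ∀ t : ℝ, Tendsto (fun k => φk k t) atTop (𝓝 (φ t))) :
    Tendsto (fun k => volume (sd (rep u (φk k) K) (rep u φ K))) atTop (𝓝 0) := by
  obtain ⟨R, hR0, hR⟩ := body_bd hK
  obtain ⟨C, hC⟩ := (hlim 0).norm.bddAbove_range
  refine shear_conv u hu _ _ (shf_meas hu hK hφ) (fun k => shf_meas hu hK (hφk k))
    (shf_add hu _ φ) (fun y => (hlim _).sub_const _) (C + R + R) ?_ _ isOpen_interior.measurableSet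
    hK.2.1.interior (hK.1.isBounded.subset interior_subset)
  intro k y
  have h1 := mid_bd hu hR0 hR y
  have h2 := (hφk k).dist_le_mul (mid u (interior K) y) 0
  have h3 : ‖φk k 0‖ ≤ C := hC ⟨k, rfl⟩
  simp only [NNReal.coe_one, one_mul, Real.dist_eq, sub_zero] at h2
  rw [Real.norm_eq_abs] at h3
  rw [shf]
  have h4 := h2.trans h1
  rw [abs_le] at *
  constructor <;> linarith

lemma essSub_trans {n : ℕ} {A B C : Set (Euc n)} (h1 : essSub A B) (h2 : essSub B C) : essSub A C := by
  refine measure_mono_null (t := (A \ B) ∪ (B \ C)) ?_ (measure_union_null h1 h2)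
  intro x hx
  by_cases h : x ∈ B
  · exact Or.inr ⟨h, hx.2⟩
  · exact Or.inl ⟨hx.1, h⟩

lemma essEq_iff {n : ℕ} {A B : Set (Euc n)} : essEq A B ↔ essSub A B ∧ essSub B A :=
  measure_union_null_iff

lemma essSub_of_subset {n : ℕ} {A B : Set (Euc n)} (h : A ⊆ B) : essSub A B := by
  unfold essSub; rw [Set.sdiff_eq_empty.2 h]; simp

/-- essential inclusion with measure bound gives reverse inclusion -/
lemma essSub_rev {n : ℕ} {A B : Set (Euc n)} (h : essSub A B) (hv : volume B ≤ volume A)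
    (hm : MeasurableSet A) (hf : volume B ≠ ⊤) : essSub B A := by
  have := ae_eq_of_ae_subset_of_measure_ge (ae_le_set.2 h) hv hm.nullMeasurableSet hf
  exact ae_le_set.1 this.symm.le

lemma cyl_convex {n : ℕ} (u c : Euc n) (ρ : ℝ) : Convex ℝ (cyl u c ρ) := by
  intro x hx y hy a b ha hb hab
  have hx' : ‖prj u (x - c)‖ ≤ ρ := hx
  have hy' : ‖prj u (y - c)‖ ≤ ρ := hy
  change ‖prj u (a • x + b • y - c)‖ ≤ ρ
  have : prj u (a • x + b • y - c) = a • prj u (x - c) + b • prj u (y - c) := by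
    have e : a • x + b • y - c = a • (x - c) + b • (y - c) := by
      have : c = (a + b) • c := by rw [hab, one_smul]
      nth_rewrite 1 [this]
      module
    rw [e]
    simp only [prj, inner_add_left, inner_smul_left, conj_trivial]
    module
  rw [this]
  calc _ ≤ ‖a • prj u (x - c)‖ + ‖b • prj u (y - c)‖ := norm_add_le _ _
    _ = a * ‖prj u (x - c)‖ + b * ‖prj u (y - c)‖ := by
      rw [norm_smul, norm_smul, Real.norm_of_nonneg ha, Real.norm_of_nonneg hb]
    _ ≤ a * ρ + b * ρ := by gcongr
    _ = ρ := by rw [← add_mul, hab, one_mul]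

lemma prj_sub_cont {n : ℕ} (u c : Euc n) : Continuous (fun y => ‖prj u (y - c)‖) :=
  ((prj_cont u).comp (continuous_id.sub continuous_const)).norm

lemma cyl_closed {n : ℕ} (u c : Euc n) (ρ : ℝ) : IsClosed (cyl u c ρ) :=
  isClosed_le (prj_sub_cont u c) continuous_const

lemma mem_int {n : ℕ} {u z p c : Euc n} {r ρ : ℝ} (h1 : dist z c < r) (h2 : ‖prj u (z - p)‖ < ρ) :
    z ∈ interior (closedBall c r ∩ cyl u p ρ) := by
  rw [mem_interior]
  refine ⟨ball c r ∩ {y | ‖prj u (y - p)‖ < ρ}, ?_, ?_, h1, h2⟩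
  · rintro y ⟨h3, h4⟩
    exact ⟨ball_subset_closedBall h3, le_of_lt (show ‖prj u (y - p)‖ < ρ from h4)⟩
  · exact isOpen_ball.inter (isOpen_lt (prj_sub_cont u p) continuous_const)

lemma prj_smul {n : ℕ} {u : Euc n} (hu : ‖u‖ = 1) (p : Euc n) (s : ℝ) : prj u (p + s • u - p) = 0 := by
  have := prj_add hu 0 s
  simpa [prj] using this

lemma norm_line {n : ℕ} {u : Euc n} (hu : ‖u‖ = 1) (p : Euc n) (s t : ℝ) :
    dist (p + s • u) (p + t • u) = |s - t| := by
  rw [dist_add_left, dist_eq_norm, ← sub_smul, norm_smul, hu, mul_one, Real.norm_eq_abs]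

lemma lens_body {n : ℕ} {u : Euc n} (hu : ‖u‖ = 1) (p : Euc n) (m : ℝ) {r ρ : ℝ} (hr : 0 < r)
    (hρ : 0 < ρ) : isConvexBody (closedBall (p + m • u) r ∩ cyl u p ρ) :=
  ⟨(isCompact_closedBall _ _).inter_right (cyl_closed u p ρ),
    (convex_closedBall _ _).inter (cyl_convex u p ρ),
    ⟨p + m • u, mem_int (by simpa using hr) (by rw [prj_smul hu]; simpa using hρ)⟩⟩

lemma ball_body {n : ℕ} (c : Euc n) {r : ℝ} (hr : 0 < r) : isConvexBody (closedBall c r) :=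
  ⟨isCompact_closedBall _ _, convex_closedBall _ _, ⟨c, by
    rw [mem_interior]; exact ⟨ball c r, ball_subset_closedBall, isOpen_ball, by simpa using hr⟩⟩⟩

lemma lens_vol {n : ℕ} {u : Euc n} (hu : ‖u‖ = 1) (p : Euc n) (m m' r ρ : ℝ) :
    volume (closedBall (p + m' • u) r ∩ cyl u p ρ) = volume (closedBall (p + m • u) r ∩ cyl u p ρ) := by
  rw [← measure_preimage_add_right volume ((m - m') • u) (closedBall (p + m • u) r ∩ cyl u p ρ)]
  congr 1
  ext y
  simp only [Set.mem_inter_iff, Set.mem_preimage, mem_closedBall, cyl, Set.mem_ofPred_eq]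
  have e1 : dist (y + (m - m') • u) (p + m • u) = dist y (p + m' • u) := by
    rw [dist_eq_norm, dist_eq_norm]; congr 1; module
  have e2 : prj u (y + (m - m') • u - p) = prj u (y - p) := by
    rw [← prj_add hu (y - p) (m - m')]; congr 1; module
  rw [e1]
  change _ ↔ _ ∧ ‖prj u (y + (m - m') • u - p)‖ ≤ ρ
  rw [e2]
  rfl

lemma lens_image {n : ℕ} {u : Euc n} (hu : ‖u‖ = 1) {D : Set (Euc n) → Set (Euc n)} {φ : ℝ → ℝ}
    (hD : inJH u D) (hφ : assocContr u D φ) (p : Euc n) (hp : ⟪p, u⟫ = 0) (m : ℝ) {r ρ : ℝ} (hr : 0 < r)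
    (hρ : 0 < ρ) : essSub (closedBall (p + φ m • u) r ∩ cyl u p ρ)
      (D (closedBall (p + m • u) r ∩ cyl u p ρ)) := by
  obtain ⟨hm, hmono, hvol, -, hcyl⟩ := hD
  have hL := lens_body hu p m hr hρ
  have h1 := hmono _ _ hL (ball_body (p + m • u) hr) (essSub_of_subset Set.inter_subset_left)
  have h2 := essSub_trans h1 (essEq_iff.1 (hφ.2 p hp m r hr)).1
  have h3 := hcyl _ hL p ρ hρ (essSub_of_subset Set.inter_subset_right)
  have h4 : essSub (D (closedBall (p + m • u) r ∩ cyl u p ρ)) (closedBall (p + φ m • u) r ∩ cyl u p ρ) := by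
    unfold essSub
    rw [Set.sdiff_inter]
    exact measure_union_null h2 h3
  refine essSub_rev h4 ?_ (hm _ hL).1 ?_
  · rw [hvol _ hL, lens_vol hu p m]
  · exact (lens_body hu p (φ m) hr hρ).1.measure_lt_top.ne

lemma prj_eq {n : ℕ} (u y : Euc n) : y = prj u y + ⟪y, u⟫ • u := by
  simp [prj]

lemma rep_eq {n : ℕ} {u : Euc n} (hu : ‖u‖ = 1) {D : Set (Euc n) → Set (Euc n)} {φ : ℝ → ℝ}
    (hD : inJH u D) (hφ : assocContr u D φ) {K : Set (Euc n)} (hK : isConvexBody K) :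
    essEq (D K) (rep u φ K) := by
  have hsub : essSub (rep u φ K) (D K) := by
    refine measure_null_of_locally_null _ ?_
    rintro y ⟨hy, -⟩
    obtain ⟨R, hR0, hR⟩ := body_bd hK
    set V := interior K with hV
    have hbd : BddAbove (fib u V y) := ⟨R, fun t ht => (abs_le.1 (fib_bd hu hR y ht)).2⟩
    have hbd' : BddBelow (fib u V y) := ⟨-R, fun t ht => (abs_le.1 (fib_bd hu hR y ht)).1⟩
    set p := prj u y with hp
    set m := mid u V y with hm
    set t := ⟪y, u⟫ with ht
    have hyp : y = p + t • u := prj_eq u y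
    have hpu : ⟪p, u⟫ = 0 := prj_inner hu y
    have hτ : t - (φ m - m) ∈ fib u V y := by
      have hy' : y - (φ m - m) • u ∈ V := hy
      change p + (t - (φ m - m)) • u ∈ V
      convert hy' using 1
      nth_rewrite 1 [hyp]
      module
    have hopen : IsOpen (fib u V y) := by
      have : Continuous (fun s : ℝ => p + s • u) := by fun_prop
      exact isOpen_interior.preimage this
    obtain ⟨ε, hε, hball⟩ := Metric.isOpen_iff.1 hopen _ hτ
    have hlo : sInf (fib u V y) < t - (φ m - m) := by
      have h := csInf_le hbd' (hball (show t - (φ m - m) - ε / 2 ∈ _ by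
        rw [mem_ball, Real.dist_eq, abs_lt]; constructor <;> linarith))
      linarith
    have hhi : t - (φ m - m) < sSup (fib u V y) := by
      have h := le_csSup hbd (hball (show t - (φ m - m) + ε / 2 ∈ _ by
        rw [mem_ball, Real.dist_eq, abs_lt]; constructor <;> linarith))
      linarith
    have hmdef : m = (sInf (fib u V y) + sSup (fib u V y)) / 2 := rfl
    obtain ⟨r, hr1, hr2⟩ : ∃ r, |t - φ m| < r ∧ r < (sSup (fib u V y) - sInf (fib u V y)) / 2 := by
      apply exists_between
      rw [abs_lt]; constructor <;> linarith
    have hr : 0 < r := (abs_nonneg _).trans_lt hr1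
    have hchord : ∀ s, |s - m| ≤ r → p + s • u ∈ V := by
      intro s hs
      rw [abs_le] at hs
      obtain ⟨a, ha, has⟩ := exists_lt_of_csInf_lt ⟨_, hτ⟩ (show sInf (fib u V y) < s by linarith)
      obtain ⟨b, hb, hsb⟩ := exists_lt_of_lt_csSup ⟨_, hτ⟩ (show s < sSup (fib u V y) by linarith)
      have hVc : Convex ℝ V := hK.2.1.interior
      have hba : 0 < b - a := by linarith
      have := hVc (show p + a • u ∈ V from ha) (show p + b • u ∈ V from hb)
        (show 0 ≤ (b - s) / (b - a) from div_nonneg (by linarith) hba.le)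
        (show 0 ≤ (s - a) / (b - a) from div_nonneg (by linarith) hba.le)
        (by field_simp; ring)
      convert this using 1
      have e1 : (b - s) / (b - a) + (s - a) / (b - a) = 1 := by field_simp; ring
      have e2 : (b - s) / (b - a) * a + (s - a) / (b - a) * b = s := by field_simp; ring
      calc p + s • u = ((b - s) / (b - a) + (s - a) / (b - a)) • p +
            ((b - s) / (b - a) * a + (s - a) / (b - a) * b) • u := by rw [e1, e2, one_smul]
        _ = _ := by module
    have hcomp : IsCompact ((fun s : ℝ => p + s • u) '' Set.Icc (m - r) (m + r)) :=
      isCompact_Icc.image (by fun_prop)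
    obtain ⟨ρ, hρ, hth⟩ := hcomp.exists_cthickening_subset_open (isOpen_interior (s := K)) (by
      rintro _ ⟨s, hs, rfl⟩
      exact hchord s (by rw [abs_le]; constructor <;> linarith [hs.1, hs.2]))
    have hLK : closedBall (p + m • u) r ∩ cyl u p ρ ⊆ K := by
      rintro z ⟨hz1, hz2⟩
      apply interior_subset
      apply hth
      have hz3 : ‖prj u (z - p)‖ ≤ ρ := hz2
      refine mem_cthickening_of_dist_le z (p + ⟪z, u⟫ • u) ρ _ ⟨⟪z, u⟫, ?_, rfl⟩ ?_
      · have h5 := abs_real_inner_le_norm (z - (p + m • u)) u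
        rw [inner_sub_left, inner_add_left, hpu, inner_smul_left, inner_self_one hu, hu] at h5
        rw [mem_closedBall, dist_eq_norm] at hz1
        simp only [conj_trivial, mul_one, zero_add] at h5
        have h6 := abs_le.1 (h5.trans hz1)
        constructor <;> linarith [h6.1, h6.2]
      · rw [dist_eq_norm]
        have e : z - (p + ⟪z, u⟫ • u) = prj u (z - p) := by
          change _ = (z - p) - ⟪z - p, u⟫ • u
          rw [inner_sub_left, hpu]
          module
        rw [e]
        exact hz3
    have hfin : essSub (closedBall (p + φ m • u) r ∩ cyl u p ρ) (D K) :=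
      essSub_trans (lens_image hu hD hφ p hpu m hr hρ)
        (hD.2.1 _ _ (lens_body hu p m hr hρ) hK (essSub_of_subset hLK))
    refine ⟨(closedBall (p + φ m • u) r ∩ cyl u p ρ) \ D K, ?_, hfin⟩
    have hint : y ∈ interior (closedBall (p + φ m • u) r ∩ cyl u p ρ) := by
      apply mem_int
      · rw [hyp, norm_line hu]; exact hr1
      · rw [hyp, prj_smul hu]; simpa using hρ
    filter_upwards [mem_nhdsWithin_of_mem_nhds (isOpen_interior.mem_nhds hint), self_mem_nhdsWithin]
      with z hz1 hz2
    exact ⟨interior_subset hz1, hz2.2⟩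
  refine essEq_iff.2 ⟨essSub_rev hsub ?_ (rep_meas hu hK hφ.1) (hD.1 K hK).2, hsub⟩
  rw [rep_vol hu hK hφ.1, hD.2.2.1 K hK]

lemma sd_symm {n : ℕ} (A B : Set (Euc n)) : sd A B = sd B A := Set.union_comm _ _

lemma sd_tri {n : ℕ} (A B C : Set (Euc n)) : volume (sd A C) ≤ volume (sd A B) + volume (sd B C) := by
  refine (measure_mono ?_).trans (measure_union_le _ _)
  intro x hx
  simp only [sd, Set.mem_union, Set.mem_sdiff] at *
  tauto

lemma ess_lim {n : ℕ} {A B : Set (Euc n)} {Ak Bk : ℕ → Set (Euc n)}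
    (hA : Tendsto (fun k => volume (sd (Ak k) A)) atTop (𝓝 0))
    (hB : Tendsto (fun k => volume (sd (Bk k) B)) atTop (𝓝 0))
    (h : ∀ k, essSub (Ak k) (Bk k)) : essSub A B := by
  have h1 : ∀ k, volume (A \ B) ≤ volume (sd (Ak k) A) + volume (sd (Bk k) B) := by
    intro k
    have : volume (A \ B) ≤ volume ((sd (Ak k) A ∪ sd (Bk k) B) ∪ (Ak k \ Bk k)) := by
      apply measure_mono
      intro x hx
      simp only [sd, Set.mem_union, Set.mem_sdiff] at *
      tauto
    refine this.trans ((measure_union_le _ _).trans ?_)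
    rw [show volume (Ak k \ Bk k) = 0 from h k, add_zero]
    exact measure_union_le _ _
  have h2 := hA.add hB
  rw [add_zero] at h2
  exact le_antisymm (ge_of_tendsto' h2 h1) zero_le

lemma ball_conv {n : ℕ} {u : Euc n} (hu : ‖u‖ = 1) (x : Euc n) (r : ℝ) {a : ℝ} {ak : ℕ → ℝ}
    (h : Tendsto ak atTop (𝓝 a)) :
    Tendsto (fun k => volume (sd (closedBall (x + ak k • u) r) (closedBall (x + a • u) r))) atTop (𝓝 0) := by
  obtain ⟨C, hC⟩ := h.norm.bddAbove_range
  have e : ∀ b : ℝ, closedBall (x + b • u) r = {y | y - b • u ∈ closedBall x r} := by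
    intro b
    ext y
    simp only [mem_closedBall, Set.mem_ofPred_eq, dist_eq_norm]
    rw [sub_sub, add_comm x]
  simp only [e]
  exact shear_conv u hu (fun _ => a) (fun k _ => ak k) measurable_const (fun k => measurable_const)
    (fun _ _ => rfl) (fun _ => h) C (fun k _ => hC ⟨k, rfl⟩) _ isClosed_closedBall.measurableSet
    (convex_closedBall _ _) isBounded_closedBall

lemma ball_sd {n : ℕ} {u : Euc n} (hu : ‖u‖ = 1) {a b ε : ℝ} (hε : 0 < ε) (hε1 : ε ≤ 1) (h : ε ≤ |a - b|) :
    volume (closedBall (0 : Euc n) (ε / 4)) ≤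
      volume (sd (closedBall (a • u) 1) (closedBall (b • u) 1)) := by
  obtain ⟨σ, hσ, hσ'⟩ : ∃ σ : ℝ, |σ| = 1 ∧ σ * (a - b) = |a - b| := by
    rcases le_total 0 (a - b) with h | h
    · exact ⟨1, by simp, by rw [abs_of_nonneg h]; ring⟩
    · exact ⟨-1, by simp, by rw [abs_of_nonpos h]; ring⟩
  have hσ2 : σ * σ = 1 := by rw [← abs_mul_abs_self, hσ]; ring
  have hnu : ∀ s : ℝ, ‖s • u‖ = |s| := fun s => by rw [norm_smul, hu, mul_one, Real.norm_eq_abs]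
  rw [Measure.addHaar_closedBall_center volume (0 : Euc n),
    ← Measure.addHaar_closedBall_center volume ((a + σ * (1 - ε / 4)) • u)]
  apply measure_mono
  intro z hz
  rw [mem_closedBall, dist_eq_norm] at hz
  left
  constructor
  · rw [mem_closedBall, dist_eq_norm]
    calc ‖z - a • u‖ = ‖(z - (a + σ * (1 - ε / 4)) • u) + (σ * (1 - ε / 4)) • u‖ := by
          congr 1; module
      _ ≤ ‖z - (a + σ * (1 - ε / 4)) • u‖ + ‖(σ * (1 - ε / 4)) • u‖ := norm_add_le _ _
      _ ≤ ε / 4 + (1 - ε / 4) := by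
          rw [hnu, abs_mul, hσ, one_mul, abs_of_nonneg (by linarith : 0 ≤ 1 - ε / 4)]
          gcongr
      _ = 1 := by ring
  · rw [mem_closedBall, dist_eq_norm, not_le]
    have h1 : ‖(a + σ * (1 - ε / 4) - b) • u‖ ≤ ‖z - b • u‖ + ‖z - (a + σ * (1 - ε / 4)) • u‖ := by
      calc _ = ‖(z - b • u) - (z - (a + σ * (1 - ε / 4)) • u)‖ := by congr 1; module
        _ ≤ _ := norm_sub_le _ _
    rw [hnu] at h1
    have h2 : σ * (a + σ * (1 - ε / 4) - b) ≤ |a + σ * (1 - ε / 4) - b| := by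
      calc _ ≤ |σ * (a + σ * (1 - ε / 4) - b)| := le_abs_self _
        _ = _ := by rw [abs_mul, hσ, one_mul]
    have h3 : σ * (a + σ * (1 - ε / 4) - b) = |a - b| + (1 - ε / 4) := by
      rw [← hσ']; linear_combination (1 - ε / 4) * hσ2
    linarith

lemma sd_le_of_ess {n : ℕ} {A B C : Set (Euc n)} (h : essEq A B) :
    volume (sd B C) ≤ volume (sd A C) := by
  have h1 : volume (sd B A) = 0 := by rw [sd_symm]; exact h
  simpa [h1] using sd_tri B A C

lemma sd_le_of_ess2 {n : ℕ} {A B C D : Set (Euc n)} (h : essEq A B) (h' : essEq C D) :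
    volume (sd B D) ≤ volume (sd A C) := by
  refine (sd_le_of_ess h).trans ?_
  rw [sd_symm, sd_symm A]
  exact sd_le_of_ess h'

lemma essEq_symm {n : ℕ} {A B : Set (Euc n)} (h : essEq A B) : essEq B A :=
  essEq_iff.2 (essEq_iff.1 h).symm

/-- Lemma 6.1: pointwise convergence of the associated contractions is equivalent to
`L¹` convergence of maps in `𝒥_H(𝒦ⁿₙ)`. -/
theorem stmt7 {n : ℕ} (hn : 2 ≤ n) (u : Euc n) (hu : ‖u‖ = 1) (t₀ : ℝ)
    (D0 : Set (Euc n) → Set (Euc n)) (Dk : ℕ → Set (Euc n) → Set (Euc n))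
    (φ0 : ℝ → ℝ) (φk : ℕ → ℝ → ℝ)
    (hJH0 : inJH u D0) (hJHk : ∀ k, inJH u (Dk k))
    (h0 : assocContr u D0 φ0) (hk : ∀ k, assocContr u (Dk k) (φk k)) :
    (convOnK Dk D0 → ∀ t : ℝ, Tendsto (fun k => φk k t) atTop (𝓝 (φ0 t))) ∧
    (∀ φ : ℝ → ℝ, (∀ t : ℝ, Tendsto (fun k => φk k t) atTop (𝓝 (φ t))) →
      ∃ D : Set (Euc n) → Set (Euc n), inJH u D ∧ assocContr u D φ ∧ convOnK Dk D ∧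
        ∀ D' : Set (Euc n) → Set (Euc n), inJH u D' → assocContr u D' φ →
          convOnK Dk D' → ∀ K : Set (Euc n), isConvexBody K → essEq (D' K) (D K)) := by
  constructor
  · intro hconv t
    by_contra hnot
    rw [Metric.tendsto_atTop] at hnot
    push Not at hnot
    obtain ⟨ε, hε, hN⟩ := hnot
    have hlow : ∀ k, ε ≤ dist (φk k t) (φ0 t) → volume (closedBall (0 : Euc n) (min ε 1 / 4)) ≤
        volume (sd (Dk k (closedBall (0 + t • u) 1)) (D0 (closedBall (0 + t • u) 1))) := by
      intro k hkε
      have h1 := (hk k).2 0 (by simp) t 1 one_pos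
      have h2 := h0.2 0 (by simp) t 1 one_pos
      have h3 := sd_le_of_ess2 h1 h2
      rw [zero_add (φk k t • u), zero_add (φ0 t • u)] at h3
      exact (ball_sd hu (lt_min hε one_pos) (min_le_right _ _)
        ((min_le_left _ _).trans hkε)).trans h3
    have hpos : 0 < volume (closedBall (0 : Euc n) (min ε 1 / 4)) :=
      measure_closedBall_pos _ _ (by have := lt_min hε one_pos; linarith)
    have hev := (hconv _ (ball_body (0 + t • u) one_pos)).eventually (gt_mem_nhds hpos)
    obtain ⟨N, hN'⟩ := eventually_atTop.1 hev
    obtain ⟨k, hkN, hkε⟩ := hN N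
    exact absurd (hlow k hkε) (not_le.2 (hN' k hkN))
  · intro φ hlim
    have hφ : LipschitzWith 1 φ := by
      refine LipschitzWith.of_dist_le_mul fun s t => ?_
      exact le_of_tendsto' ((hlim s).dist (hlim t)) fun k => (hk k).1.dist_le_mul s t
    have hconv : convOnK Dk (rep u φ) := by
      intro K hK
      refine tendsto_of_tendsto_of_tendsto_of_le_of_le tendsto_const_nhds
        (rep_conv hu hK hφ (fun k => (hk k).1) hlim) (fun _ => zero_le) (fun k => ?_)
      exact sd_le_of_ess (essEq_symm (rep_eq hu (hJHk k) (hk k) hK))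
    have hcontr : assocContr u (rep u φ) φ := by
      refine ⟨hφ, fun x hx t r hr => ?_⟩
      have h1 := hconv _ (ball_body (x + t • u) hr)
      have h2 := ball_conv hu x r (hlim t)
      have h3 := fun k => essEq_iff.1 ((hk k).2 x hx t r hr)
      exact essEq_iff.2 ⟨ess_lim h1 h2 fun k => (h3 k).1, ess_lim h2 h1 fun k => (h3 k).2⟩
    have hmono : ∀ A B : Set (Euc n), isConvexBody A → isConvexBody B →
      essSub A B → essSub (rep u φ A) (rep u φ B) := fun A B hA hB hAB =>
        ess_lim (hconv A hA) (hconv B hB) fun k => (hJHk k).2.1 A B hA hB hAB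
    refine ⟨rep u φ, ⟨?_, hmono, fun A hA => rep_vol hu hA hφ, ?_, ?_⟩, hcontr, hconv, ?_⟩
    · intro A hA
      exact ⟨rep_meas hu hA hφ, by rw [rep_vol hu hA hφ]; exact hA.1.measure_lt_top.ne⟩
    · rintro A hA ⟨x, r, hr, hAx⟩
      refine ⟨prj u x + φ ⟪x, u⟫ • u, r, hr, ?_⟩
      have h1 := hcontr.2 (prj u x) (prj_inner hu x) ⟪x, u⟫ r hr
      rw [← prj_eq] at h1
      rw [essEq_iff] at *
      exact ⟨essSub_trans (hmono _ _ hA (ball_body x hr) hAx.1) h1.1,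
        essSub_trans h1.2 (hmono _ _ (ball_body x hr) hA hAx.2)⟩
    · intro A hA c ρ hρ hAc
      refine ess_lim (hconv A hA) (Bk := fun _ => cyl u c ρ) ?_
        fun k => (hJHk k).2.2.2.2 A hA c ρ hρ hAc
      simp [sd]
    · intro D' _ _ hD' K hK
      have h1 := (hD' K hK).add (hconv K hK)
      rw [add_zero] at h1
      refine le_antisymm (ge_of_tendsto' h1 fun k => ?_) zero_le
      have := sd_tri (D' K) (Dk k K) (rep u φ K)
      rw [sd_symm (D' K) (Dk k K)] at this
      exact this
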